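/- arXiv:0808.1505 — 4 statements merged into one kernel-verified Lean document; each statement's English description precedes it below -/
import Mathlib

section
/- Let n and t be natural numbers with n > 3t, let Fa be a finset of Fin n with card Fa ≤ t, let V be a type, and let v, w : Fin n → V satisfy v k = w k for every k ∉ Fa. If A and B are finsets of Fin n with card A ≥ n - t and card B ≥ n - t, and r, r' ∈ V are such that v k = r for all k ∈ A and w k = r' for all k ∈ B, then r = r'. -/
lemma exists_mem_and_mem_and_notMem_of_card_add_card_lt {α : Type*} {s A B F : Finset α}
    (hAs : A ⊆ s) (hBs : B ⊆ s) (h : s.card + F.card < A.card + B.card) :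
    ∃ a ∈ A, a ∈ B ∧ a ∉ F := by
  classical
  have hunion : (A ∪ B).card ≤ s.card := Finset.card_le_card (Finset.union_subset hAs hBs)
  have hinter : F.card < (A ∩ B).card := by
    have := Finset.card_union_add_card_inter A B
    omega
  obtain ⟨a, haAB, haF⟩ := Finset.exists_mem_notMem_of_card_lt_card hinter
  obtain ⟨haA, haB⟩ := Finset.mem_inter.mp haAB
  exact ⟨a, haA, haB, haF⟩

theorem wrb_correctness_general {ι V : Type*} {P Fa A B : Finset ι} {v w : ι → V} {r r' : V}
    (hAP : A ⊆ P) (hBP : B ⊆ P) (hcard : P.card + Fa.card < A.card + B.card)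
    (hvw : ∀ k, k ∉ Fa → v k = w k) (hr : ∀ k ∈ A, v k = r) (hr' : ∀ k ∈ B, w k = r') :
    r = r' := by
  obtain ⟨k, hkA, hkB, hkFa⟩ := exists_mem_and_mem_and_notMem_of_card_add_card_lt hAP hBP hcard
  calc
    r = v k := (hr k hkA).symm
    _ = w k := hvw k hkFa
    _ = r' := hr' k hkB

/-- Correctness of Weak Reliable Broadcast: two nonfaulty processes that each accept a
value on the strength of a quorum of `n - t` identical messages accept the same value. -/
theorem wrb_correctness
    (n t : ℕ) (hn : n > 3 * t)
    (Fa : Finset (Fin n)) (hFa : Fa.card ≤ t)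
    (V : Type*) (v w : Fin n → V)
    (hvw : ∀ k, k ∉ Fa → v k = w k)
    (A B : Finset (Fin n))
    (hA : A.card ≥ n - t) (hB : B.card ≥ n - t)
    (r r' : V)
    (hr : ∀ k ∈ A, v k = r) (hr' : ∀ k ∈ B, w k = r') :
    r = r' := by
  -- Two quorums share at least `n - 2 * t > t` processes, so they cannot share only faulty ones.
  have hcard : (Finset.univ : Finset (Fin n)).card + Fa.card < A.card + B.card := by
    rw [Finset.card_fin]
    omega
  exact wrb_correctness_general A.subset_univ B.subset_univ hcard hvw hr hr'
end

section
/- Let F be a finite field, let t be a natural number with card F > t, let T be a finset of F with 0 ∉ T and card T ≤ t, let y : F → F, and let s ∈ F. Then the number of polynomials f over F of degree at most t satisfying f.eval 0 = s and f.eval x = y x for every x ∈ T is exactly (card F)^(t - card T). In particular, this number is independent of s. -/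
/-!
Two polynomials agree on a finite set of nodes exactly when their difference is a multiple of the
monic nodal polynomial of these nodes. Hence the polynomials of degree less than `n` that take
prescribed values at `k ≤ n` nodes are `f₀ + nodal * q`, where `f₀` is the Lagrange interpolant and
`q` runs over all polynomials of degree less than `n - k`; there are `|F| ^ (n - k)` of them.
The secret is one more prescribed value, so that `n = t + 1` and `k = |T| + 1`.
-/

open Polynomial Lagrange

namespace HidingCount

theorem natCard_degreeLT (R : Type*) [Semiring R] (n : ℕ) :
    Nat.card (degreeLT R n) = Nat.card R ^ n := by
  rw [Nat.card_congr (degreeLTEquiv R n).toEquiv, Nat.card_fun, Nat.card_fin]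

theorem mul_mem_degreeLT_iff_of_monic {R : Type*} [Semiring R] {p q : R[X]} {n : ℕ} (hp : p.Monic) :
    p * q ∈ degreeLT R n ↔ q ∈ degreeLT R (n - p.natDegree) := by
  rcases eq_or_ne q 0 with rfl | hq
  · simp only [mul_zero, zero_mem]
  · have hpq : p * q ≠ 0 := hp.mul_right_ne_zero hq
    rw [mem_degreeLT, mem_degreeLT, ← natDegree_lt_iff_degree_lt hpq,
      ← natDegree_lt_iff_degree_lt hq, hp.natDegree_mul' hq]
    omega

section Domain

variable {R ι : Type*} [CommRing R] [IsDomain R] {s : Finset ι} {v : ι → R}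

theorem nodal_dvd_iff {f : R[X]} (hv : Set.InjOn v s) :
    nodal s v ∣ f ↔ ∀ i ∈ s, f.eval (v i) = 0 := by
  constructor
  · rintro ⟨q, rfl⟩ i hi
    rw [eval_mul, eval_nodal_at_node hi, zero_mul]
  · intro hf
    have hdeg : (f %ₘ nodal s v).degree < s.card :=
      degree_nodal (s := s) (v := v) ▸ degree_modByMonic_lt f nodal_monic
    have heval : ∀ i ∈ s, (f %ₘ nodal s v).eval (v i) = 0 := fun i hi => by
      rw [modByMonic_eq_sub_mul_div, eval_sub, eval_mul, eval_nodal_at_node hi, hf i hi,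
        zero_mul, sub_zero]
    rw [← modByMonic_eq_zero_iff_dvd nodal_monic]
    exact eq_zero_of_degree_lt_of_eval_index_eq_zero s hv hdeg heval

theorem setOf_mem_degreeLT_and_eval_eq_eval {f₀ : R[X]} {n : ℕ} (hv : Set.InjOn v s)
    (hf₀ : f₀ ∈ degreeLT R n) :
    {f | f ∈ degreeLT R n ∧ ∀ i ∈ s, f.eval (v i) = f₀.eval (v i)} =
      (fun q => f₀ + nodal s v * q) '' degreeLT R (n - s.card) := by
  have hmem (q : R[X]) : nodal s v * q ∈ degreeLT R n ↔ q ∈ degreeLT R (n - s.card) := by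
    rw [mul_mem_degreeLT_iff_of_monic nodal_monic, natDegree_nodal]
  ext f
  constructor
  · rintro ⟨hf, heval⟩
    obtain ⟨q, hq⟩ : nodal s v ∣ f - f₀ :=
      (nodal_dvd_iff hv).2 fun i hi => by rw [eval_sub, heval i hi, sub_self]
    have hfq : f₀ + nodal s v * q = f := by rw [← hq, add_sub_cancel]
    exact ⟨q, (hmem q).1 (hq ▸ sub_mem hf hf₀), hfq⟩
  · rintro ⟨q, hq, rfl⟩
    refine ⟨add_mem hf₀ ((hmem q).2 hq), fun i hi => ?_⟩
    rw [eval_add, eval_mul, eval_nodal_at_node hi, zero_mul, add_zero]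

theorem natCard_mem_degreeLT_and_eval_eq_eval {f₀ : R[X]} {n : ℕ} (hv : Set.InjOn v s)
    (hf₀ : f₀ ∈ degreeLT R n) :
    Nat.card {f : R[X] // f ∈ degreeLT R n ∧ ∀ i ∈ s, f.eval (v i) = f₀.eval (v i)} =
      Nat.card R ^ (n - s.card) := by
  have hinj : Function.Injective fun q => f₀ + nodal s v * q :=
    (add_right_injective f₀).comp (mul_right_injective₀ nodal_ne_zero)
  calc
    _ = Nat.card ((fun q => f₀ + nodal s v * q) '' (degreeLT R (n - s.card) : Set R[X])) :=
      congrArg (fun A : Set R[X] => Nat.card A) (setOf_mem_degreeLT_and_eval_eq_eval hv hf₀)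
    _ = Nat.card (degreeLT R (n - s.card)) := Nat.card_image_of_injective hinj _
    _ = Nat.card R ^ (n - s.card) := natCard_degreeLT R _

end Domain

theorem natCard_mem_degreeLT_and_eval_eq {F ι : Type*} [Field F] {s : Finset ι}
    {v : ι → F} {n : ℕ} (hv : Set.InjOn v s) (hs : s.card ≤ n) (r : ι → F) :
    Nat.card {f : F[X] // f ∈ degreeLT F n ∧ ∀ i ∈ s, f.eval (v i) = r i} =
      Nat.card F ^ (n - s.card) := by
  classical
  have hmem : interpolate s v r ∈ degreeLT F n :=
    degreeLT_mono hs (mem_degreeLT.2 (degree_interpolate_lt r hv))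
  rw [← natCard_mem_degreeLT_and_eval_eq_eval hv hmem]
  refine Nat.card_congr (Equiv.subtypeEquivRight fun f => and_congr_right fun _ => ?_)
  exact forall₂_congr fun i hi => by rw [eval_interpolate_at_node r hv hi]

end HidingCount

open HidingCount

theorem hiding_count_polynomials_general {F : Type*} [Field F] [Fintype F] {t : ℕ}
    {T : Finset F} {a : F} (haT : a ∉ T) (hTt : T.card ≤ t) (y : F → F) (s : F) :
    Nat.card {f : F[X] // f.natDegree ≤ t ∧ f.eval a = s ∧ ∀ x ∈ T, f.eval x = y x} =
      Fintype.card F ^ (t - T.card) := by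
  classical
  have hcard : (insert a T).card = T.card + 1 := Finset.card_insert_of_notMem haT
  have hcard_le : (insert a T).card ≤ t + 1 := hcard ▸ Nat.succ_le_succ hTt
  have hdegree (f : F[X]) : f.natDegree ≤ t ↔ f ∈ degreeLT F (t + 1) := by
    rw [degreeLT_succ_eq_degreeLE, mem_degreeLE, natDegree_le_iff_degree_le]
  have hvalues (f : F[X]) : (f.eval a = s ∧ ∀ x ∈ T, f.eval x = y x) ↔
      ∀ x ∈ insert a T, f.eval (id x) = Function.update y a s x := by
    rw [Finset.forall_mem_insert, Function.update_self]
    refine and_congr_right fun _ => forall₂_congr fun x hx => ?_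
    rw [Function.update_of_ne (ne_of_mem_of_not_mem hx haT), id]
  simp only [hdegree, hvalues]
  rw [natCard_mem_degreeLT_and_eval_eq Function.injective_id.injOn hcard_le, hcard,
    Nat.add_sub_add_right, Nat.card_eq_fintype_card]

/-- Hiding property of threshold secret sharing: for any secret `s`, the number of
degree-`t` polynomials `f` with `f 0 = s` that agree with the view `y` on a set `T` of
at most `t` nonzero points is exactly `(card F)^(t - card T)`, independently of `s`. -/
theorem hiding_count_polynomials
    (F : Type*) [Field F] [Fintype F] (t : ℕ) (hFt : Fintype.card F > t)
    (T : Finset F) (hT0 : (0 : F) ∉ T) (hTt : T.card ≤ t)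
    (y : F → F) (s : F) :
    Nat.card {f : Polynomial F //
        f.natDegree ≤ t ∧ f.eval 0 = s ∧ ∀ x ∈ T, f.eval x = y x}
      = Fintype.card F ^ (t - T.card) :=
  hiding_count_polynomials_general hT0 hTt y s
end

section
/- Let F be a field, let t be a natural number, let K be a finset of F with card K ≥ t + 1, and let g, h : F → Polynomial F be families such that for every k ∈ K the polynomials g k and h k have degree at most t, and (g k).eval ℓ = (h ℓ).eval k for all k, ℓ ∈ K. Then there exists a unique bivariate polynomial f over F of degree at most t in each variable such that for every k ∈ K, the univariate polynomial y ↦ f(k, y) equals g k and the univariate polynomial x ↦ f(x, k) equals h k. -/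
/-!
Let `m` bound the degrees of the columns. Interpolating only `m + 1` of the rows, coefficientwise
in `X`, keeps the degree in `X` at most `m`. By consistency, the column of the result at a node `y`
is the Lagrange interpolant of the values of the prescribed column at `y`, hence is that column.
Each row, including those not interpolated, then agrees with the prescribed one at all column nodes,
whose number exceeds both degrees. For uniqueness, each coefficient in `Y` is a polynomial in `X`
determined by its values at the row nodes.
-/

open Polynomial
open scoped Polynomial.Bivariate

theorem eq_of_map_evalRingHom_eq {R ι : Type*} [CommRing R] [IsDomain R] {s : Finset ι}
    {v : ι → R} {p q : R[X][Y]} (hv : Set.InjOn v s)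
    (hp : ∀ d, (p.coeff d).degree < s.card) (hq : ∀ d, (q.coeff d).degree < s.card)
    (hpq : ∀ i ∈ s, p.map (evalRingHom (v i)) = q.map (evalRingHom (v i))) : p = q := by
  ext1 d
  refine eq_of_degrees_lt_of_eval_index_eq s hv (hp d) (hq d) fun i hi => ?_
  simpa only [coeff_map, coe_evalRingHom] using congrArg (coeff · d) (hpq i hi)

theorem degree_lt_of_natDegree_le_of_lt {R : Type*} [Semiring R] {p : R[X]} {m n : ℕ}
    (hp : p.natDegree ≤ m) (hmn : m < n) : p.degree < n :=
  (degree_le_of_natDegree_le hp).trans_lt (Nat.cast_lt.mpr hmn)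

section RowInterpolant

variable {F ι : Type*} [Field F] [DecidableEq ι] {s : Finset ι} {v : ι → F}

/-- The bivariate polynomial with prescribed rows `g i` at the nodes `v i`, `i ∈ s`, obtained by
Lagrange interpolation in `X`, the inner variable of `F[X][Y]`. As for `Lagrange.interpolate`, the
nodes need to be distinct for the rows to be attained. -/
noncomputable def rowInterpolant (s : Finset ι) (v : ι → F) (g : ι → F[X]) : F[X][Y] :=
  ∑ i ∈ s, (g i).map C * C (Lagrange.basis s v i)

theorem coeff_rowInterpolant (g : ι → F[X]) (d : ℕ) :
    (rowInterpolant s v g).coeff d = Lagrange.interpolate s v fun i => (g i).coeff d := by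
  simp only [rowInterpolant, finsetSum_coeff, coeff_mul_C, coeff_map, Lagrange.interpolate_apply]

theorem eval_C_rowInterpolant (g : ι → F[X]) (y : F) :
    (rowInterpolant s v g).eval (C y) = Lagrange.interpolate s v fun i => (g i).eval y := by
  simp only [rowInterpolant, eval_finsetSum, eval_mul, eval_C, eval_map_apply,
    Lagrange.interpolate_apply]

theorem natDegree_rowInterpolant_le {g : ι → F[X]} {n : ℕ} (hg : ∀ i ∈ s, (g i).natDegree ≤ n) :
    (rowInterpolant s v g).natDegree ≤ n :=
  natDegree_sum_le_of_forall_le _ _ fun i hi =>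
    (natDegree_mul_C_le _ _).trans (natDegree_map_le.trans (hg i hi))

theorem natDegree_coeff_rowInterpolant_le (hv : Set.InjOn v s) (g : ι → F[X]) (d : ℕ) :
    ((rowInterpolant s v g).coeff d).natDegree ≤ s.card - 1 := by
  rw [coeff_rowInterpolant]
  exact natDegree_le_of_degree_le (Lagrange.degree_interpolate_le _ hv)

theorem eval_C_rowInterpolant_eq_of_eval_eq {g : ι → F[X]} {p : F[X]} {y : F} (hv : Set.InjOn v s)
    (hp : p.degree < s.card) (hgp : ∀ i ∈ s, (g i).eval y = p.eval (v i)) :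
    (rowInterpolant s v g).eval (C y) = p := by
  rw [eval_C_rowInterpolant]
  exact (Lagrange.eq_interpolate_of_eval_eq _ hv hp fun i hi => (hgp i hi).symm).symm

end RowInterpolant

theorem bivariate_from_consistent_rows_cols_general
    {F ι κ : Type*} [Field F] {m n : ℕ} {s : Finset ι} {t : Finset κ} {v : ι → F} {w : κ → F}
    (hv : Set.InjOn v s) (hw : Set.InjOn w t) (hs : m < s.card) (ht : n < t.card)
    {g : ι → F[X]} {h : κ → F[X]}
    (hg : ∀ i ∈ s, (g i).natDegree ≤ n) (hh : ∀ j ∈ t, (h j).natDegree ≤ m)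
    (hcons : ∀ i ∈ s, ∀ j ∈ t, (g i).eval (w j) = (h j).eval (v i)) :
    ∃! f : F[X][Y], (f.natDegree ≤ n ∧ ∀ d, (f.coeff d).natDegree ≤ m) ∧
      (∀ i ∈ s, f.map (evalRingHom (v i)) = g i) ∧ ∀ j ∈ t, f.eval (C (w j)) = h j := by
  classical
  obtain ⟨u, hus, hu⟩ := Finset.exists_subset_card_eq (Nat.succ_le_of_lt hs)
  have hvu : Set.InjOn v u := hv.mono hus
  set f := rowInterpolant u v g
  have hfY : f.natDegree ≤ n := natDegree_rowInterpolant_le fun i hi => hg i (hus hi)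
  have hfX (d : ℕ) : (f.coeff d).natDegree ≤ m :=
    (natDegree_coeff_rowInterpolant_le hvu g d).trans (by lia)
  have hcol : ∀ j ∈ t, f.eval (C (w j)) = h j := fun j hj =>
    eval_C_rowInterpolant_eq_of_eval_eq hvu (degree_lt_of_natDegree_le_of_lt (hh j hj) (by lia))
      fun i hi => hcons i (hus hi) j hj
  have hrow : ∀ i ∈ s, f.map (evalRingHom (v i)) = g i := fun i hi =>
    eq_of_degrees_lt_of_eval_index_eq t hw
      (degree_lt_of_natDegree_le_of_lt (natDegree_map_le.trans hfY) ht)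
      (degree_lt_of_natDegree_le_of_lt (hg i hi) ht) fun j hj => by
        rw [map_evalRingHom_eval, evalEval, hcol j hj, hcons i hi j hj]
  refine ⟨f, ⟨⟨hfY, hfX⟩, hrow, hcol⟩, ?_⟩
  rintro f' ⟨⟨-, hf'X⟩, hrow', -⟩
  exact eq_of_map_evalRingHom_eq hv (fun d => degree_lt_of_natDegree_le_of_lt (hf'X d) hs)
    (fun d => degree_lt_of_natDegree_le_of_lt (hfX d) hs)
    fun i hi => (hrow' i hi).trans (hrow i hi).symm

/-- Pairwise-consistency lemma of SVSS: a family of at least `t + 1` pairwise-consistent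
row polynomials `g k` and column polynomials `h k` (with `(g k).eval ℓ = (h ℓ).eval k`)
of degree at most `t` is induced by a unique bivariate polynomial of degree at most `t`
in each variable.  Here `f(k, ·)`, the row polynomial in `Y`, is obtained by evaluating
the `X`-coefficients of `f` at `k` (i.e., `f.map (Polynomial.evalRingHom k)`), and
`f(·, k)`, the column polynomial in `X`, is `f.eval (Polynomial.C k)`. -/
theorem bivariate_from_consistent_rows_cols
    (F : Type*) [Field F] (t : ℕ)
    (K : Finset F) (hK : K.card ≥ t + 1)
    (g h : F → Polynomial F)
    (hdeg : ∀ k ∈ K, (g k).natDegree ≤ t ∧ (h k).natDegree ≤ t)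
    (hcons : ∀ k ∈ K, ∀ ℓ ∈ K, (g k).eval ℓ = (h ℓ).eval k) :
    ∃! f : Polynomial (Polynomial F),
      (f.natDegree ≤ t ∧ ∀ i, (f.coeff i).natDegree ≤ t) ∧
      ∀ k ∈ K, f.map (Polynomial.evalRingHom k) = g k ∧
        f.eval (Polynomial.C k) = h k := by
  simpa only [forall₂_and, id_eq] using bivariate_from_consistent_rows_cols_general
    (Set.injOn_id (K : Set F)) (Set.injOn_id (K : Set F)) hK hK
    (fun k hk => (hdeg k hk).1) (fun k hk => (hdeg k hk).2) hcons
end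

section
/- Let F be a finite field, let t be a natural number, let T be a finset of F with 0 ∉ T and card T ≤ t, and let g, h : F → Polynomial F be families such that for every j ∈ T the polynomials g j and h j have degree at most t, and (g j).eval k = (h k).eval j for all j, k ∈ T. Then for any s, s' ∈ F, the number of bivariate polynomials f over F of degree at most t in each variable satisfying f(0, 0) = s, f(j, ·) = g j and f(·, j) = h j for every j ∈ T, equals the number of such bivariate polynomials with f(0, 0) = s' in place of s. -/
/-!
Let `p = ∏ j ∈ T, (X - j)`. Then `p(X) p(Y)` has degree at most `t` in each variable and vanishes on
every row and column indexed by `T`, while its value `p(0)²` at the origin is a unit because no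
process sits at `0`. Adding a multiple of it to `f` therefore moves the secret `f(0, 0)` to any
prescribed value without changing the view.
-/

section Hiding

open Polynomial Cardinal
open scoped Polynomial.Bivariate

variable {R : Type*} [CommRing R] {t : ℕ} {T : Finset R}

/-- The dealer's polynomials compatible with the secret `s` and the joint view `(g, h)` of the
processes in `T`: those of degree at most `t` in each variable whose value at the origin is `s` and
whose row and column at each `j ∈ T` are `g j` and `h j`. -/
def consistentSharings (t : ℕ) (T : Finset R) (g h : R → R[X]) (s : R) : Set R[X][Y] :=
  {f | (f.natDegree ≤ t ∧ ∀ i, (f.coeff i).natDegree ≤ t) ∧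
    f.evalEval 0 0 = s ∧
    ∀ j ∈ T, f.map (evalRingHom j) = g j ∧ f.eval (C j) = h j}

theorem add_mem_consistentSharings {f f' : R[X][Y]} {g g' h h' : R → R[X]} {s s' : R}
    (hf : f ∈ consistentSharings t T g h s) (hf' : f' ∈ consistentSharings t T g' h' s') :
    f + f' ∈ consistentSharings t T (g + g') (h + h') (s + s') := by
  obtain ⟨⟨hfY, hfX⟩, hfs, hfT⟩ := hf
  obtain ⟨⟨hfY', hfX'⟩, hfs', hfT'⟩ := hf'
  refine ⟨⟨natDegree_add_le_of_degree_le hfY hfY', fun i => ?_⟩, ?_, fun j hj => ⟨?_, ?_⟩⟩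
  · rw [coeff_add]
    exact natDegree_add_le_of_degree_le (hfX i) (hfX' i)
  · rw [evalEval_add, hfs, hfs']
  · rw [Polynomial.map_add, (hfT j hj).1, (hfT' j hj).1, Pi.add_apply]
  · rw [eval_add, (hfT j hj).2, (hfT' j hj).2, Pi.add_apply]

theorem smul_mem_consistentSharings (c : R) {f : R[X][Y]} {g h : R → R[X]} {s : R}
    (hf : f ∈ consistentSharings t T g h s) :
    c • f ∈ consistentSharings t T (c • g) (c • h) (c * s) := by
  obtain ⟨⟨hfY, hfX⟩, hfs, hfT⟩ := hf
  refine ⟨⟨(natDegree_smul_le c f).trans hfY, fun i => ?_⟩, ?_, fun j hj => ⟨?_, ?_⟩⟩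
  · rw [coeff_smul]
    exact (natDegree_smul_le c _).trans (hfX i)
  · rw [evalEval_smul, hfs, smul_eq_mul]
  · rw [Pi.smul_apply, ← (hfT j hj).1]
    ext n
    simp
  · rw [eval_smul, (hfT j hj).2, Pi.smul_apply]

/-- The polynomial `p(X) p(Y)` with `p = ∏ j ∈ T, (X - j)`. Adding multiples of it to a sharing
shifts the secret without being seen by the processes in `T`. -/
noncomputable def secretShift (T : Finset R) : R[X][Y] :=
  C (Lagrange.nodal T id) * (Lagrange.nodal T id).map C

theorem secretShift_mem_consistentSharings (hTt : T.card ≤ t) :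
    secretShift T ∈ consistentSharings t T 0 0 ((Lagrange.nodal T id).eval 0 ^ 2) := by
  have hdeg : (Lagrange.nodal T id).natDegree ≤ t := by
    nontriviality R
    rwa [Lagrange.natDegree_nodal]
  have hroot (j : R) (hj : j ∈ T) : (Lagrange.nodal T id).eval j = 0 :=
    Lagrange.eval_nodal_at_node (v := id) hj
  refine ⟨⟨?_, fun i => ?_⟩, ?_, fun j hj => ⟨?_, ?_⟩⟩
  · exact (natDegree_C_mul_le _ _).trans (natDegree_map_le.trans hdeg)
  · rw [secretShift, coeff_C_mul, coeff_map]
    exact (natDegree_mul_C_le _ _).trans hdeg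
  · rw [secretShift, evalEval_mul, evalEval_C, evalEval_map_C, sq]
  · rw [secretShift, Polynomial.map_mul, map_C, coe_evalRingHom, hroot j hj, C_0, zero_mul,
      Pi.zero_apply]
  · rw [secretShift, eval_mul, eval_C, eval_map_apply, hroot j hj, C_0, mul_zero, Pi.zero_apply]

theorem isUnit_eval_zero_nodal (hT : ∀ j ∈ T, IsUnit j) :
    IsUnit ((Lagrange.nodal T id).eval 0) := by
  rw [Lagrange.eval_nodal, IsUnit.prod_iff]
  simpa using hT

theorem exists_mem_consistentSharings_zero (hT : ∀ j ∈ T, IsUnit j) (hTt : T.card ≤ t) (a : R) :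
    ∃ d, d ∈ consistentSharings t T 0 0 a := by
  obtain ⟨c, hc⟩ := ((isUnit_eval_zero_nodal hT).pow 2).dvd (a := a)
  refine ⟨c • secretShift T, ?_⟩
  simpa [hc, mul_comm] using
    smul_mem_consistentSharings c (secretShift_mem_consistentSharings hTt)

theorem bivariate_hiding_count_general (hT : ∀ j ∈ T, IsUnit j) (hTt : T.card ≤ t)
    (g h : R → R[X]) (s s' : R) :
    #(consistentSharings t T g h s) = #(consistentSharings t T g h s') := by
  obtain ⟨d, hd⟩ := exists_mem_consistentSharings_zero hT hTt (s' - s)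
  refine mk_congr ((Equiv.addRight d).subtypeEquiv fun f => ⟨fun hf => ?_, fun hf => ?_⟩)
  · simpa using add_mem_consistentSharings hf hd
  · simpa using add_mem_consistentSharings hf (smul_mem_consistentSharings (-1) hd)

end Hiding

/-- Hiding property of the bivariate secret-sharing scheme of SVSS: the view of at most
`t` processes — row polynomials `g j = f(j, ·)` (the `X`-coefficients of `f` evaluated
at `j`) and column polynomials `h j = f(·, j)` (`f` evaluated at `j` in `Y`) — is
consistent with every possible secret `f(0,0)` in exactly the same number of ways. -/
theorem bivariate_hiding_count
    (F : Type*) [Field F] [Fintype F] (t : ℕ)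
    (T : Finset F) (hT0 : (0 : F) ∉ T) (hTt : T.card ≤ t)
    (g h : F → Polynomial F)
    (hdeg : ∀ j ∈ T, (g j).natDegree ≤ t ∧ (h j).natDegree ≤ t)
    (hcons : ∀ j ∈ T, ∀ k ∈ T, (g j).eval k = (h k).eval j)
    (s s' : F) :
    Nat.card {f : Polynomial (Polynomial F) //
        (f.natDegree ≤ t ∧ ∀ i, (f.coeff i).natDegree ≤ t) ∧
        (f.eval (Polynomial.C 0)).eval 0 = s ∧
        ∀ j ∈ T, f.map (Polynomial.evalRingHom j) = g j ∧
          f.eval (Polynomial.C j) = h j}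
      = Nat.card {f : Polynomial (Polynomial F) //
        (f.natDegree ≤ t ∧ ∀ i, (f.coeff i).natDegree ≤ t) ∧
        (f.eval (Polynomial.C 0)).eval 0 = s' ∧
        ∀ j ∈ T, f.map (Polynomial.evalRingHom j) = g j ∧
          f.eval (Polynomial.C j) = h j} :=
  congrArg Cardinal.toNat <| bivariate_hiding_count_general
    (fun _ hj => (ne_of_mem_of_not_mem hj hT0).isUnit) hTt g h s s'
end
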